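/- arXiv:1808.04254 — 8 statements merged into one kernel-verified Lean document; each statement's English description precedes it below -/
import Mathlib

section
/- The group G (the homophonic quotient of the free group on the 26 letters of the German alphabet by the listed German homophone relations) is the trivial group; that is, every element of G equals the identity. -/
/-- The 26 letters of the Latin alphabet used for German. -/
inductive GermanLetter
  | a | b | c | d | e | f | g | h | i | j | k | l | m
  | n | o | p | q | r | s | t | u | v | w | x | y | z
  deriving DecidableEq

open GermanLetter

/-- A word, read as the ordered product of its letters in the free group. -/
def germanWord (l : List GermanLetter) : FreeGroup GermanLetter :=
  (l.map FreeGroup.of).prod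

/-- The 27 relators A * B⁻¹ coming from the German homophone pairs (A, B). -/
def germanRels : Set (FreeGroup GermanLetter) :=
  { germanWord [w,a,a,g,e] * (germanWord [w,a,g,e])⁻¹,
    germanWord [w,a,h,l] * (germanWord [w,a,l])⁻¹,
    germanWord [m,e,e,r] * (germanWord [m,e,h,r])⁻¹,
    germanWord [b,o,o,t] * (germanWord [b,o,t])⁻¹,
    germanWord [b,u,g] * (germanWord [b,u,k])⁻¹,
    germanWord [a,l,b] * (germanWord [a,l,p])⁻¹,
    germanWord [m,a,n,n] * (germanWord [m,a,n])⁻¹,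
    germanWord [v,i,e,l] * (germanWord [f,i,e,l])⁻¹,
    germanWord [w,a,g,e] * (germanWord [v,a,g,e])⁻¹,
    germanWord [g,e,w,a,l,l,t] * (germanWord [g,e,w,a,l,t])⁻¹,
    germanWord [s,t,a,r,r,t] * (germanWord [s,t,a,r,t])⁻¹,
    germanWord [s,c,h,a,f,f,t] * (germanWord [s,c,h,a,f,t])⁻¹,
    germanWord [k,l,a,p,p,s,t] * (germanWord [k,l,a,p,s,t])⁻¹,
    germanWord [f,a,s,s,t] * (germanWord [f,a,s,t])⁻¹,
    germanWord [z,i,t,t,e,r,n] * (germanWord [z,i,t,h,e,r,n])⁻¹,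
    germanWord [s,t,a,d,t] * (germanWord [s,t,a,t,t])⁻¹,
    germanWord [h,e,m,m,t] * (germanWord [h,e,m,d])⁻¹,
    germanWord [p,a,c,k,t] * (germanWord [p,a,k,t])⁻¹,
    germanWord [k,i,t,z] * (germanWord [k,i,t,t,s])⁻¹,
    germanWord [l,a,x] * (germanWord [l,a,c,h,s])⁻¹,
    germanWord [k,l,i,p,p] * (germanWord [c,l,i,p])⁻¹,
    germanWord [t,s,c,h,a,u] * (germanWord [c,i,a,o])⁻¹,
    germanWord [r,o,i,e,n] * (germanWord [r,e,u,e,n])⁻¹,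
    germanWord [b,e,a,t,e,n] * (germanWord [b,i,e,t,e,n])⁻¹,
    germanWord [t,o,y] * (germanWord [t,o,i])⁻¹,
    germanWord [j,a,e,c,k,c,h,e,n] * (germanWord [y,a,e,k,c,h,e,n])⁻¹,
    germanWord [c,l,i,q,u,e] * (germanWord [k,l,i,c,k,e])⁻¹ }

/-- The German homophonic quotient group. -/
abbrev GermanGroup := PresentedGroup germanRels

/-- A relator gives an equality of words in the quotient. -/
theorem german_rel_eq (A B : List GermanLetter)
    (hAB : germanWord A * (germanWord B)⁻¹ ∈ germanRels) :
    (A.map (PresentedGroup.of (rels := germanRels))).prod =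
      (B.map (PresentedGroup.of (rels := germanRels))).prod := by
  have key : ∀ L : List GermanLetter, PresentedGroup.mk germanRels (germanWord L) =
      (L.map (PresentedGroup.of (rels := germanRels))).prod := by
    intro L
    rw [germanWord, map_list_prod, List.map_map]
    rfl
  have h1 := PresentedGroup.one_of_mem hAB
  rw [map_mul, map_inv, mul_inv_eq_one, key, key] at h1
  exact h1

/-- The German homophonic quotient group is trivial. -/
theorem german_group_trivial : ∀ x : GermanGroup, x = 1 := by
  have h_a : (PresentedGroup.of a : GermanGroup) = 1 := by
    simpa [mul_assoc] using
      german_rel_eq [w,a,a,g,e] [w,a,g,e] (by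
          exact Set.mem_insert _ _)
  have h_h : (PresentedGroup.of h : GermanGroup) = 1 := by
    simpa [mul_assoc, h_a] using
      german_rel_eq [w,a,h,l] [w,a,l] (by
          iterate 1 apply Set.mem_insert_of_mem
          exact Set.mem_insert _ _)
  have h_e : (PresentedGroup.of e : GermanGroup) = 1 := by
    simpa [mul_assoc, h_h] using
      german_rel_eq [m,e,e,r] [m,e,h,r] (by
          iterate 2 apply Set.mem_insert_of_mem
          exact Set.mem_insert _ _)
  have h_o : (PresentedGroup.of o : GermanGroup) = 1 := by
    simpa [mul_assoc] using
      german_rel_eq [b,o,o,t] [b,o,t] (by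
          iterate 3 apply Set.mem_insert_of_mem
          exact Set.mem_insert _ _)
  have h_n : (PresentedGroup.of n : GermanGroup) = 1 := by
    simpa [mul_assoc, h_a] using
      german_rel_eq [m,a,n,n] [m,a,n] (by
          iterate 6 apply Set.mem_insert_of_mem
          exact Set.mem_insert _ _)
  have h_l : (PresentedGroup.of l : GermanGroup) = 1 := by
    simpa [mul_assoc, h_a, h_e] using
      german_rel_eq [g,e,w,a,l,l,t] [g,e,w,a,l,t] (by
          iterate 9 apply Set.mem_insert_of_mem
          exact Set.mem_insert _ _)
  have h_r : (PresentedGroup.of r : GermanGroup) = 1 := by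
    simpa [mul_assoc, h_a] using
      german_rel_eq [s,t,a,r,r,t] [s,t,a,r,t] (by
          iterate 10 apply Set.mem_insert_of_mem
          exact Set.mem_insert _ _)
  have h_f : (PresentedGroup.of f : GermanGroup) = 1 := by
    simpa [mul_assoc, h_a, h_h] using
      german_rel_eq [s,c,h,a,f,f,t] [s,c,h,a,f,t] (by
          iterate 11 apply Set.mem_insert_of_mem
          exact Set.mem_insert _ _)
  have h_p : (PresentedGroup.of p : GermanGroup) = 1 := by
    simpa [mul_assoc, h_a, h_l] using
      german_rel_eq [k,l,a,p,p,s,t] [k,l,a,p,s,t] (by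
          iterate 12 apply Set.mem_insert_of_mem
          exact Set.mem_insert _ _)
  have h_s : (PresentedGroup.of s : GermanGroup) = 1 := by
    simpa [mul_assoc, h_a, h_f] using
      german_rel_eq [f,a,s,s,t] [f,a,s,t] (by
          iterate 13 apply Set.mem_insert_of_mem
          exact Set.mem_insert _ _)
  have h_b : (PresentedGroup.of b : GermanGroup) = 1 := by
    simpa [mul_assoc, h_a, h_l, h_p] using
      german_rel_eq [a,l,b] [a,l,p] (by
          iterate 5 apply Set.mem_insert_of_mem
          exact Set.mem_insert _ _)
  have h_v : (PresentedGroup.of v : GermanGroup) = 1 := by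
    simpa [mul_assoc, h_e, h_l, h_f] using
      german_rel_eq [v,i,e,l] [f,i,e,l] (by
          iterate 7 apply Set.mem_insert_of_mem
          exact Set.mem_insert _ _)
  have h_w : (PresentedGroup.of w : GermanGroup) = 1 := by
    simpa [mul_assoc, h_a, h_e, h_v] using
      german_rel_eq [w,a,g,e] [v,a,g,e] (by
          iterate 8 apply Set.mem_insert_of_mem
          exact Set.mem_insert _ _)
  have h_t : (PresentedGroup.of t : GermanGroup) = 1 := by
    simpa [mul_assoc, h_h, h_e, h_n, h_r] using
      german_rel_eq [z,i,t,t,e,r,n] [z,i,t,h,e,r,n] (by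
          iterate 14 apply Set.mem_insert_of_mem
          exact Set.mem_insert _ _)
  have h_d : (PresentedGroup.of d : GermanGroup) = 1 := by
    simpa [mul_assoc, h_a, h_s, h_t] using
      german_rel_eq [s,t,a,d,t] [s,t,a,t,t] (by
          iterate 15 apply Set.mem_insert_of_mem
          exact Set.mem_insert _ _)
  have h_m : (PresentedGroup.of m : GermanGroup) = 1 := by
    simpa [mul_assoc, h_h, h_e, h_t, h_d] using
      german_rel_eq [h,e,m,m,t] [h,e,m,d] (by
          iterate 16 apply Set.mem_insert_of_mem
          exact Set.mem_insert _ _)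
  have h_c : (PresentedGroup.of c : GermanGroup) = 1 := by
    simpa [mul_assoc, h_a, h_p, h_t] using
      german_rel_eq [p,a,c,k,t] [p,a,k,t] (by
          iterate 17 apply Set.mem_insert_of_mem
          exact Set.mem_insert _ _)
  have h_z : (PresentedGroup.of z : GermanGroup) = 1 := by
    simpa [mul_assoc, h_s, h_t] using
      german_rel_eq [k,i,t,z] [k,i,t,t,s] (by
          iterate 18 apply Set.mem_insert_of_mem
          exact Set.mem_insert _ _)
  have h_x : (PresentedGroup.of x : GermanGroup) = 1 := by
    simpa [mul_assoc, h_a, h_h, h_l, h_s, h_c] using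
      german_rel_eq [l,a,x] [l,a,c,h,s] (by
          iterate 19 apply Set.mem_insert_of_mem
          exact Set.mem_insert _ _)
  have h_k : (PresentedGroup.of k : GermanGroup) = 1 := by
    simpa [mul_assoc, h_l, h_p, h_c] using
      german_rel_eq [k,l,i,p,p] [c,l,i,p] (by
          iterate 20 apply Set.mem_insert_of_mem
          exact Set.mem_insert _ _)
  have h_g : (PresentedGroup.of g : GermanGroup) = 1 := by
    simpa [mul_assoc, h_b, h_k] using
      german_rel_eq [b,u,g] [b,u,k] (by
          iterate 4 apply Set.mem_insert_of_mem
          exact Set.mem_insert _ _)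
  have h_i : (PresentedGroup.of i : GermanGroup) = 1 := by
    simpa [mul_assoc, h_a, h_e, h_n, h_b, h_t] using
      (german_rel_eq [b,e,a,t,e,n] [b,i,e,t,e,n] (by
          iterate 23 apply Set.mem_insert_of_mem
          exact Set.mem_insert _ _)).symm
  have h_u : (PresentedGroup.of u : GermanGroup) = 1 := by
    simpa [mul_assoc, h_a, h_h, h_o, h_s, h_t, h_c, h_i] using
      german_rel_eq [t,s,c,h,a,u] [c,i,a,o] (by
          iterate 21 apply Set.mem_insert_of_mem
          exact Set.mem_insert _ _)
  have h_y : (PresentedGroup.of y : GermanGroup) = 1 := by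
    simpa [mul_assoc, h_o, h_t, h_i] using
      german_rel_eq [t,o,y] [t,o,i] (by
          iterate 24 apply Set.mem_insert_of_mem
          exact Set.mem_insert _ _)
  have h_j : (PresentedGroup.of j : GermanGroup) = 1 := by
    simpa [mul_assoc, h_a, h_h, h_e, h_n, h_c, h_k, h_y] using
      german_rel_eq [j,a,e,c,k,c,h,e,n] [y,a,e,k,c,h,e,n] (by
          iterate 25 apply Set.mem_insert_of_mem
          exact Set.mem_insert _ _)
  have h_q : (PresentedGroup.of q : GermanGroup) = 1 := by
    simpa [mul_assoc, h_e, h_l, h_c, h_k, h_i, h_u] using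
      german_rel_eq [c,l,i,q,u,e] [k,l,i,c,k,e] (by
          iterate 26 apply Set.mem_insert_of_mem
          exact Set.mem_singleton _)
  have hom_eq : MonoidHom.id GermanGroup = 1 := by
    apply PresentedGroup.ext
    intro letter
    cases letter <;> assumption
  intro x
  exact DFunLike.congr_fun hom_eq x
end

section
/- The ordered decomposition uniquely encodes any formal composition of Korean letters: the concatenation (flatten) map from lists of syllable patterns to strings over {consonant, vowel} is injective. That is, if two lists L₁ and L₂ of elements of P have equal concatenations (L₁.flatten = L₂.flatten as lists over Bool), then L₁ = L₂. -/
/-- The three Korean syllable patterns, with a consonant encoded as `false`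
and a vowel encoded as `true`: c+v, c+v+c, and c+v+c+c. -/
def koreanPatterns : Set (List Bool) :=
  {[false, true], [false, true, false], [false, true, false, false]}

/-- A concatenation of patterns is empty or starts with consonant, vowel. -/
theorem korean_flatten_shape (L : List (List Bool))
    (h : ∀ p ∈ L, p ∈ koreanPatterns) :
    L.flatten = [] ∨ ∃ t, L.flatten = false :: true :: t := by
  cases L with
  | nil => left; rfl
  | cons a L =>
    right
    have ha := h a (by simp)
    simp only [koreanPatterns, Set.mem_insert_iff, Set.mem_singleton_iff] at ha
    rcases ha with rfl | rfl | rfl <;> simp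

/-- Ordered decomposition uniquely encodes any formal composition of Korean letters:
the concatenation map from lists of syllable patterns to strings over
{consonant, vowel} is injective. -/
theorem korean_ordered_decomposition_unique
    (L₁ L₂ : List (List Bool))
    (h₁ : ∀ p ∈ L₁, p ∈ koreanPatterns)
    (h₂ : ∀ p ∈ L₂, p ∈ koreanPatterns)
    (h : L₁.flatten = L₂.flatten) : L₁ = L₂ := by
  induction L₁ generalizing L₂ with
  | nil =>
    cases L₂ with
    | nil => rfl
    | cons b M =>
      have hb := h₂ b (by simp)
      simp only [koreanPatterns, Set.mem_insert_iff, Set.mem_singleton_iff] at hb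
      rcases hb with rfl | rfl | rfl <;> simp at h
  | cons a L ih =>
    have ha := h₁ a (by simp)
    have hL : ∀ p ∈ L, p ∈ koreanPatterns := fun p hp => h₁ p (by simp [hp])
    simp only [koreanPatterns, Set.mem_insert_iff, Set.mem_singleton_iff] at ha
    cases L₂ with
    | nil => rcases ha with rfl | rfl | rfl <;> simp at h
    | cons b M =>
      have hb := h₂ b (by simp)
      have hM : ∀ p ∈ M, p ∈ koreanPatterns := fun p hp => h₂ p (by simp [hp])
      simp only [koreanPatterns, Set.mem_insert_iff, Set.mem_singleton_iff] at hb
      have key : a = b ∧ L.flatten = M.flatten := by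
        have sL := korean_flatten_shape L hL
        have sM := korean_flatten_shape M hM
        rw [List.flatten_cons, List.flatten_cons] at h
        generalize L.flatten = x at *
        generalize M.flatten = y at *
        clear ih h₁ h₂ hL hM
        rcases ha with rfl | rfl | rfl <;> rcases hb with rfl | rfl | rfl <;>
          rcases sL with rfl | ⟨t, rfl⟩ <;> rcases sM with rfl | ⟨u, rfl⟩ <;> simp_all
      obtain ⟨rfl, e⟩ := key
      rw [ih M hL hM e]
end

section
/- In the Korean homophonic quotient group G_K, the image of every one of the 19 consonants G, GG, N, D, DD, L, M, B, BB, S, SS, NG, J, JJ, CH, K, T, P, H equals the identity. -/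
/-- The 40 Korean characters: 19 consonants followed by 21 vowels. -/
inductive KChar
  -- consonants: ㄱ ㄲ ㄴ ㄷ ㄸ ㄹ ㅁ ㅂ ㅃ ㅅ ㅆ ㅇ ㅈ ㅉ ㅊ ㅋ ㅌ ㅍ ㅎ
  | G | GG | N | D | DD | L | M | B | BB | S | SS | NG | J | JJ | CH | K | T | P | H
  -- vowels: ㅏ ㅐ ㅑ ㅒ ㅓ ㅔ ㅕ ㅖ ㅗ ㅘ ㅙ ㅚ ㅛ ㅜ ㅝ ㅞ ㅟ ㅠ ㅡ ㅢ ㅣ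
  | A | AE | YA | YAE | EO | E | YEO | YE | O | WA | WAE | OE | YO | U | WO | WE | WI | YU | EU | UI | I
  deriving DecidableEq

open KChar

/-- A word, read as the ordered product of its characters in the free group. -/
def kWord (l : List KChar) : FreeGroup KChar :=
  (l.map FreeGroup.of).prod

/-- The 37 relators W₁ * W₂⁻¹ coming from the Korean homophone relations W₁ = W₂. -/
def koreanRels : Set (FreeGroup KChar) :=
  { kWord [NG,A,N,NG,I,L,H,A,D,A] * (kWord [NG,A,N,I,L,H,A,D,A])⁻¹,
    kWord [B,U,NG,EO,K] * (kWord [B,U,NG,EO,G])⁻¹,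
    kWord [B,A,GG] * (kWord [B,A,G])⁻¹,
    kWord [N,A,S] * (kWord [N,A,D])⁻¹,
    kWord [N,A,J] * (kWord [N,A,D])⁻¹,
    kWord [N,A,CH] * (kWord [N,A,D])⁻¹,
    kWord [B,A,T] * (kWord [B,A,D])⁻¹,
    kWord [B,U,L,S,O] * (kWord [B,U,L,SS,O])⁻¹,
    kWord [J,I,P] * (kWord [J,I,B])⁻¹,
    kWord [NG,A,P,M,A,D,A,NG] * (kWord [NG,A,M,M,A,D,A,NG])⁻¹,
    kWord [NG,I,SS,N,EU,N] * (kWord [NG,I,N,N,EU,N])⁻¹,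
    kWord [G,U,G,M,U,L] * (kWord [G,U,NG,M,U,L])⁻¹,
    kWord [N,O,H,N,EU,N] * (kWord [N,O,N,N,EU,N])⁻¹,
    kWord [S,U,T,H,A,D,A] * (kWord [S,U,T,A,D,A])⁻¹,
    kWord [NG,U,S,D,A] * (kWord [NG,U,D,DD,A])⁻¹,
    kWord [NG,YA,G,J,I] * (kWord [NG,YA,G,JJ,I])⁻¹,
    kWord [M,A,G,L,O,N] * (kWord [M,A,NG,N,O,N])⁻¹,
    kWord [G,U,G,B,A,B] * (kWord [G,U,G,BB,A,B])⁻¹,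
    kWord [N,EO,L,B,D,A] * (kWord [N,EO,L,DD,A])⁻¹,
    kWord [G,A,J,I,NG,EO] * (kWord [G,A,J,YEO])⁻¹,
    kWord [G,A,J,YEO] * (kWord [G,A,J,EO])⁻¹,
    kWord [T,O,NG,G,YE] * (kWord [T,O,NG,G,E])⁻¹,
    kWord [H,UI,M,I] * (kWord [H,I,M,I])⁻¹,
    kWord [G,EU,M,G,OE] * (kWord [G,EU,M,G,WE])⁻¹,
    kWord [N,U,NG,I,D,A] * (kWord [N,WI,D,A])⁻¹,
    kWord [D,OE,NG,EO] * (kWord [D,WAE])⁻¹,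
    kWord [SS,A,NG,I,D,A] * (kWord [SS,AE,D,A])⁻¹,
    kWord [T,EU,NG,I,D,A] * (kWord [T,UI,D,A])⁻¹,
    kWord [T,UI,D,A] * (kWord [T,I,D,A])⁻¹,
    kWord [M,I,NG,A] * (kWord [M,YA])⁻¹,
    kWord [SS,O,NG,I,D,A] * (kWord [SS,OE,D,A])⁻¹,
    kWord [WAE] * (kWord [O,AE])⁻¹,
    kWord [WO] * (kWord [U,EO])⁻¹,
    kWord [YO] * (kWord [I,O])⁻¹,
    kWord [YU] * (kWord [I,U])⁻¹,
    kWord [UI] * (kWord [E])⁻¹,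
    kWord [WA] * (kWord [O,A])⁻¹ }

/-- The Korean homophonic quotient group. -/
abbrev KoreanGroup := PresentedGroup koreanRels

/-- A relator of the presentation yields an equality of words in the group. -/
theorem kRel_eq {l₁ l₂ : List KChar} (h : kWord l₁ * (kWord l₂)⁻¹ ∈ koreanRels) :
    (l₁.map (fun c => (PresentedGroup.of c : KoreanGroup))).prod =
      (l₂.map (fun c => (PresentedGroup.of c : KoreanGroup))).prod := by
  have key : ∀ l : List KChar, PresentedGroup.mk koreanRels (kWord l) =
      (l.map (fun c => (PresentedGroup.of c : KoreanGroup))).prod := by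
    intro l
    simp only [kWord, map_list_prod, List.map_map]
    rfl
  have h1 := PresentedGroup.one_of_mem h
  rw [map_mul, map_inv, mul_inv_eq_one, key, key] at h1
  exact h1

/-- In the Korean homophonic quotient group, the image of every one of the 19
consonants equals the identity. -/
theorem korean_consonants_trivial :
    ∀ c ∈ [G, GG, N, D, DD, L, M, B, BB, S, SS, NG, J, JJ, CH, K, T, P, H],
      (PresentedGroup.of c : KoreanGroup) = 1 := by
  have r1 := kRel_eq (l₁ := [NG,A,N,NG,I,L,H,A,D,A]) (l₂ := [NG,A,N,I,L,H,A,D,A]) (by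
    unfold koreanRels
    exact Set.mem_insert _ _)
  have eNG : (PresentedGroup.of NG : KoreanGroup) = 1 := by
    simpa [mul_assoc] using r1
  have r2 := kRel_eq (l₁ := [B,U,NG,EO,K]) (l₂ := [B,U,NG,EO,G]) (by
    unfold koreanRels
    iterate 1 apply Set.mem_insert_of_mem
    exact Set.mem_insert _ _)
  have eK : (PresentedGroup.of K : KoreanGroup) = (PresentedGroup.of G : KoreanGroup) := by
    simpa [mul_assoc, eNG] using r2
  have r3 := kRel_eq (l₁ := [B,A,GG]) (l₂ := [B,A,G]) (by
    unfold koreanRels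
    iterate 2 apply Set.mem_insert_of_mem
    exact Set.mem_insert _ _)
  have eGG : (PresentedGroup.of GG : KoreanGroup) = (PresentedGroup.of G : KoreanGroup) := by
    simpa [mul_assoc, eNG, eK] using r3
  have r12 := kRel_eq (l₁ := [G,U,G,M,U,L]) (l₂ := [G,U,NG,M,U,L]) (by
    unfold koreanRels
    iterate 11 apply Set.mem_insert_of_mem
    exact Set.mem_insert _ _)
  have eG : (PresentedGroup.of G : KoreanGroup) = 1 := by
    simpa [mul_assoc, eNG, eK, eGG] using r12
  have r4 := kRel_eq (l₁ := [N,A,S]) (l₂ := [N,A,D]) (by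
    unfold koreanRels
    iterate 3 apply Set.mem_insert_of_mem
    exact Set.mem_insert _ _)
  have eS : (PresentedGroup.of S : KoreanGroup) = (PresentedGroup.of D : KoreanGroup) := by
    simpa [mul_assoc, eNG, eK, eGG, eG] using r4
  have r5 := kRel_eq (l₁ := [N,A,J]) (l₂ := [N,A,D]) (by
    unfold koreanRels
    iterate 4 apply Set.mem_insert_of_mem
    exact Set.mem_insert _ _)
  have eJ : (PresentedGroup.of J : KoreanGroup) = (PresentedGroup.of D : KoreanGroup) := by
    simpa [mul_assoc, eNG, eK, eGG, eG, eS] using r5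
  have r6 := kRel_eq (l₁ := [N,A,CH]) (l₂ := [N,A,D]) (by
    unfold koreanRels
    iterate 5 apply Set.mem_insert_of_mem
    exact Set.mem_insert _ _)
  have eCH : (PresentedGroup.of CH : KoreanGroup) = (PresentedGroup.of D : KoreanGroup) := by
    simpa [mul_assoc, eNG, eK, eGG, eG, eS, eJ] using r6
  have r7 := kRel_eq (l₁ := [B,A,T]) (l₂ := [B,A,D]) (by
    unfold koreanRels
    iterate 6 apply Set.mem_insert_of_mem
    exact Set.mem_insert _ _)
  have eT : (PresentedGroup.of T : KoreanGroup) = (PresentedGroup.of D : KoreanGroup) := by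
    simpa [mul_assoc, eNG, eK, eGG, eG, eS, eJ, eCH] using r7
  have r8 := kRel_eq (l₁ := [B,U,L,S,O]) (l₂ := [B,U,L,SS,O]) (by
    unfold koreanRels
    iterate 7 apply Set.mem_insert_of_mem
    exact Set.mem_insert _ _)
  have eSS : (PresentedGroup.of SS : KoreanGroup) = (PresentedGroup.of D : KoreanGroup) := by
    simpa [mul_assoc, eNG, eK, eGG, eG, eS, eJ, eCH, eT] using r8.symm
  have r9 := kRel_eq (l₁ := [J,I,P]) (l₂ := [J,I,B]) (by
    unfold koreanRels
    iterate 8 apply Set.mem_insert_of_mem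
    exact Set.mem_insert _ _)
  have eP : (PresentedGroup.of P : KoreanGroup) = (PresentedGroup.of B : KoreanGroup) := by
    simpa [mul_assoc, eNG, eK, eGG, eG, eS, eJ, eCH, eT, eSS] using r9
  have r10 := kRel_eq (l₁ := [NG,A,P,M,A,D,A,NG]) (l₂ := [NG,A,M,M,A,D,A,NG]) (by
    unfold koreanRels
    iterate 9 apply Set.mem_insert_of_mem
    exact Set.mem_insert _ _)
  have eB : (PresentedGroup.of B : KoreanGroup) = (PresentedGroup.of M : KoreanGroup) := by
    simpa [mul_assoc, eNG, eK, eGG, eG, eS, eJ, eCH, eT, eSS, eP] using r10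
  have r11 := kRel_eq (l₁ := [NG,I,SS,N,EU,N]) (l₂ := [NG,I,N,N,EU,N]) (by
    unfold koreanRels
    iterate 10 apply Set.mem_insert_of_mem
    exact Set.mem_insert _ _)
  have eD : (PresentedGroup.of D : KoreanGroup) = (PresentedGroup.of N : KoreanGroup) := by
    simpa [mul_assoc, eNG, eK, eGG, eG, eS, eJ, eCH, eT, eSS, eP, eB] using r11
  have r13 := kRel_eq (l₁ := [N,O,H,N,EU,N]) (l₂ := [N,O,N,N,EU,N]) (by
    unfold koreanRels
    iterate 12 apply Set.mem_insert_of_mem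
    exact Set.mem_insert _ _)
  have eH : (PresentedGroup.of H : KoreanGroup) = (PresentedGroup.of N : KoreanGroup) := by
    simpa [mul_assoc, eNG, eK, eGG, eG, eS, eJ, eCH, eT, eSS, eP, eB, eD] using r13
  have r14 := kRel_eq (l₁ := [S,U,T,H,A,D,A]) (l₂ := [S,U,T,A,D,A]) (by
    unfold koreanRels
    iterate 13 apply Set.mem_insert_of_mem
    exact Set.mem_insert _ _)
  have eN : (PresentedGroup.of N : KoreanGroup) = 1 := by
    simpa [mul_assoc, eNG, eK, eGG, eG, eS, eJ, eCH, eT, eSS, eP, eB, eD, eH] using r14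
  have r15 := kRel_eq (l₁ := [NG,U,S,D,A]) (l₂ := [NG,U,D,DD,A]) (by
    unfold koreanRels
    iterate 14 apply Set.mem_insert_of_mem
    exact Set.mem_insert _ _)
  have eDD : (PresentedGroup.of DD : KoreanGroup) = 1 := by
    simpa [mul_assoc, eNG, eK, eGG, eG, eS, eJ, eCH, eT, eSS, eP, eB, eD, eH, eN] using r15
  have r16 := kRel_eq (l₁ := [NG,YA,G,J,I]) (l₂ := [NG,YA,G,JJ,I]) (by
    unfold koreanRels
    iterate 15 apply Set.mem_insert_of_mem
    exact Set.mem_insert _ _)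
  have eJJ : (PresentedGroup.of JJ : KoreanGroup) = 1 := by
    simpa [mul_assoc, eNG, eK, eGG, eG, eS, eJ, eCH, eT, eSS, eP, eB, eD, eH, eN, eDD] using r16
  have r17 := kRel_eq (l₁ := [M,A,G,L,O,N]) (l₂ := [M,A,NG,N,O,N]) (by
    unfold koreanRels
    iterate 16 apply Set.mem_insert_of_mem
    exact Set.mem_insert _ _)
  have eL : (PresentedGroup.of L : KoreanGroup) = 1 := by
    simpa [mul_assoc, eNG, eK, eGG, eG, eS, eJ, eCH, eT, eSS, eP, eB, eD, eH, eN, eDD, eJJ] using r17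
  have r18 := kRel_eq (l₁ := [G,U,G,B,A,B]) (l₂ := [G,U,G,BB,A,B]) (by
    unfold koreanRels
    iterate 17 apply Set.mem_insert_of_mem
    exact Set.mem_insert _ _)
  have eBB : (PresentedGroup.of BB : KoreanGroup) = (PresentedGroup.of M : KoreanGroup) := by
    simpa [mul_assoc, eNG, eK, eGG, eG, eS, eJ, eCH, eT, eSS, eP, eB, eD, eH, eN, eDD, eJJ, eL] using r18.symm
  have r19 := kRel_eq (l₁ := [N,EO,L,B,D,A]) (l₂ := [N,EO,L,DD,A]) (by
    unfold koreanRels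
    iterate 18 apply Set.mem_insert_of_mem
    exact Set.mem_insert _ _)
  have eM : (PresentedGroup.of M : KoreanGroup) = 1 := by
    simpa [mul_assoc, eNG, eK, eGG, eG, eS, eJ, eCH, eT, eSS, eP, eB, eD, eH, eN, eDD, eJJ, eL, eBB] using r19
  intro c hc
  simp only [List.mem_cons, List.not_mem_nil, or_false] at hc
  rcases hc with rfl | rfl | rfl | rfl | rfl | rfl | rfl | rfl | rfl | rfl | rfl | rfl | rfl | rfl | rfl | rfl | rfl | rfl | rfl <;> simp [eNG, eK, eGG, eG, eS, eJ, eCH, eT, eSS, eP, eB, eD, eH, eN, eDD, eJJ, eL, eBB, eM]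
end

section
/- In the Korean homophonic quotient group G_K, the images of the vowels I (ㅣ), EU (ㅡ), E (ㅔ), YE (ㅖ), and UI (ㅢ) each equal the identity. -/
open KChar

/-- A relator gives an equality of words in the quotient. -/
theorem korean_rel_eq {v w : List KChar} (h : kWord v * (kWord w)⁻¹ ∈ koreanRels) :
    (v.map (PresentedGroup.of (rels := koreanRels))).prod =
      (w.map (PresentedGroup.of (rels := koreanRels))).prod := by
  have key : ∀ l : List KChar, PresentedGroup.mk koreanRels (kWord l) =
      (l.map (PresentedGroup.of (rels := koreanRels))).prod := by
    intro l
    rw [kWord, map_list_prod, List.map_map]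
    rfl
  have h1 := PresentedGroup.one_of_mem h
  rw [map_mul, map_inv, mul_inv_eq_one, key, key] at h1
  exact h1

/-- In the Korean homophonic quotient group, the images of the vowels
ㅣ (I), ㅡ (EU), ㅔ (E), ㅖ (YE), and ㅢ (UI) each equal the identity. -/
theorem korean_trivial_vowels :
    (PresentedGroup.of I : KoreanGroup) = 1 ∧
    (PresentedGroup.of EU : KoreanGroup) = 1 ∧
    (PresentedGroup.of E : KoreanGroup) = 1 ∧
    (PresentedGroup.of YE : KoreanGroup) = 1 ∧
    (PresentedGroup.of UI : KoreanGroup) = 1 := by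
  have h1 := korean_rel_eq (v := [NG,A,N,NG,I,L,H,A,D,A]) (w := [NG,A,N,I,L,H,A,D,A])
    (by simp only [koreanRels, Set.mem_insert_iff, true_or, or_true])
  have h20 := korean_rel_eq (v := [G,A,J,I,NG,EO]) (w := [G,A,J,YEO])
    (by simp only [koreanRels, Set.mem_insert_iff, true_or, or_true])
  have h21 := korean_rel_eq (v := [G,A,J,YEO]) (w := [G,A,J,EO])
    (by simp only [koreanRels, Set.mem_insert_iff, true_or, or_true])
  have h22 := korean_rel_eq (v := [T,O,NG,G,YE]) (w := [T,O,NG,G,E])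
    (by simp only [koreanRels, Set.mem_insert_iff, true_or, or_true])
  have h28 := korean_rel_eq (v := [T,EU,NG,I,D,A]) (w := [T,UI,D,A])
    (by simp only [koreanRels, Set.mem_insert_iff, true_or, or_true])
  have h29 := korean_rel_eq (v := [T,UI,D,A]) (w := [T,I,D,A])
    (by simp only [koreanRels, Set.mem_insert_iff, true_or, or_true])
  have h36 := korean_rel_eq (v := [UI]) (w := [E])
    (by simp only [koreanRels, Set.mem_insert_iff, true_or, or_true])
  simp only [List.map_cons, List.map_nil, List.prod_cons, List.prod_nil, mul_one,
    mul_right_inj] at h1 h20 h21 h22 h28 h29 h36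
  have hNG : (PresentedGroup.of NG : KoreanGroup) = 1 := mul_eq_right.mp h1
  rw [h21, hNG, one_mul] at h20
  have hI : (PresentedGroup.of I : KoreanGroup) = 1 := mul_eq_right.mp h20
  have hUI : (PresentedGroup.of UI : KoreanGroup) = 1 := (mul_left_injective _ h29).trans hI
  rw [hNG, hI, hUI, one_mul, one_mul] at h28
  have hE : (PresentedGroup.of E : KoreanGroup) = 1 := h36.symm.trans hUI
  exact ⟨hI, mul_eq_right.mp h28, hE, h22.trans hE, hUI⟩
end

section
/- In the Korean homophonic quotient group G_K, the images of the vowels satisfy A = AE = YA = EO = YEO (all five images are equal). -/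
open KChar

/-- A relator in `koreanRels` gives an equality of products in the quotient. -/
lemma korean_rel (l₁ l₂ : List KChar) (h : kWord l₁ * (kWord l₂)⁻¹ ∈ koreanRels) :
    (l₁.map (fun c => (PresentedGroup.of c : KoreanGroup))).prod =
      (l₂.map (fun c => (PresentedGroup.of c : KoreanGroup))).prod := by
  have key : ∀ l : List KChar, PresentedGroup.mk koreanRels (kWord l) =
      (l.map (fun c => (PresentedGroup.of c : KoreanGroup))).prod := by
    intro l
    rw [kWord, map_list_prod, List.map_map]
    rfl
  have h1 := PresentedGroup.one_of_mem h
  rw [map_mul, map_inv, mul_inv_eq_one, key, key] at h1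
  exact h1

/-- In the Korean homophonic quotient group, ㅏ = ㅐ = ㅑ = ㅓ = ㅕ. -/
theorem korean_A_class :
    (PresentedGroup.of A : KoreanGroup) = PresentedGroup.of AE ∧
    (PresentedGroup.of AE : KoreanGroup) = PresentedGroup.of YA ∧
    (PresentedGroup.of YA : KoreanGroup) = PresentedGroup.of EO ∧
    (PresentedGroup.of EO : KoreanGroup) = PresentedGroup.of YEO := by
  have r1 := korean_rel [NG,A,N,NG,I,L,H,A,D,A] [NG,A,N,I,L,H,A,D,A] (by simp only [koreanRels, Set.mem_insert_iff, true_or, or_true])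
  have r20 := korean_rel [G,A,J,I,NG,EO] [G,A,J,YEO] (by simp only [koreanRels, Set.mem_insert_iff, true_or, or_true])
  have r21 := korean_rel [G,A,J,YEO] [G,A,J,EO] (by simp only [koreanRels, Set.mem_insert_iff, true_or, or_true])
  have r26 := korean_rel [D,OE,NG,EO] [D,WAE] (by simp only [koreanRels, Set.mem_insert_iff, true_or, or_true])
  have r27 := korean_rel [SS,A,NG,I,D,A] [SS,AE,D,A] (by simp only [koreanRels, Set.mem_insert_iff, true_or, or_true])
  have r30 := korean_rel [M,I,NG,A] [M,YA] (by simp only [koreanRels, Set.mem_insert_iff, true_or, or_true])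
  have r31 := korean_rel [SS,O,NG,I,D,A] [SS,OE,D,A] (by simp only [koreanRels, Set.mem_insert_iff, true_or, or_true])
  have r32 := korean_rel [WAE] [O,AE] (by simp only [koreanRels, Set.mem_insert_iff, true_or, or_true])
  simp only [List.map_cons, List.map_nil, List.prod_cons, List.prod_nil, mul_one,
    mul_right_inj] at r1 r20 r21 r26 r27 r30 r31 r32
  have hNG : (PresentedGroup.of NG : KoreanGroup) = 1 := mul_eq_right.mp r1
  rw [r21, hNG, one_mul] at r20
  have hI : (PresentedGroup.of I : KoreanGroup) = 1 := mul_eq_right.mp r20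
  rw [hNG, hI, one_mul, one_mul, mul_left_inj] at r27
  rw [hNG, hI, one_mul, one_mul] at r30
  rw [hNG, hI, one_mul, one_mul, mul_left_inj] at r31
  rw [hNG, one_mul, r32, ← r31, mul_right_inj] at r26
  exact ⟨r27, r27.symm.trans r30, (r30.symm.trans r27).trans r26.symm, r21.symm⟩
end

section
/- In the Turkish homophonic quotient group G_T, the images of the letters h and t each equal the identity. -/
/-- The 29 letters of the Modern Turkish alphabet:
a, b, c, ç (`cc`), d, e, f, g, ğ (`gg`, soft g), h, ı (`ii`, dotless i), i, j, k,
l, m, n, o, ö (`oo`), p, r, s, ş (`ss`), t, u, ü (`uu`), v, y, z. -/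
inductive TLetter
  | a | b | c
  | cc -- ç
  | d | e | f | g
  | gg -- ğ (soft g)
  | h
  | ii -- ı (dotless i)
  | i | j | k | l | m | n | o
  | oo -- ö
  | p | r | s
  | ss -- ş
  | t | u
  | uu -- ü
  | v | y | z
  deriving DecidableEq

open TLetter

/-- A word, read as the ordered product of its letters in the free group. -/
def tWord (l : List TLetter) : FreeGroup TLetter :=
  (l.map FreeGroup.of).prod

/-- The relators A * B⁻¹ coming from the Turkish homophone pairs (A, B). -/
def turkishRels : Set (FreeGroup TLetter) :=
  { tWord [k,a,a,n] * (tWord [k,a,gg,a,n])⁻¹,               -- kaan / kağan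
    tWord [d,e,r,s,h,a,n,e] * (tWord [d,e,r,s,a,n,e])⁻¹,    -- dershane / dersane
    tWord [h,a,c,e,t,t,e,p,e] * (tWord [h,a,c,e,t,e,p,e])⁻¹, -- hacettepe / hacetepe
    tWord [a,n,ii,t,t,e,p,e] * (tWord [a,n,ii,t,e,p,e])⁻¹,  -- anıttepe / anıtepe
    tWord [b,a,k,a,y,ii,m] * (tWord [b,a,k,ii,y,ii,m])⁻¹,   -- bakayım / bakıyım
    tWord [i,cc,e,c,e,k] * (tWord [i,cc,i,c,e,k])⁻¹,        -- içecek / içicek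
    tWord [a,gg,a,b,e,y] * (tWord [a,b,i])⁻¹ }              -- ağabey / abi

/-- The Turkish homophonic quotient group. -/
abbrev TurkishGroup := PresentedGroup turkishRels

/-- In the Turkish homophonic quotient group, the images of h and t each equal
the identity. -/
theorem turkish_h_t_trivial :
    (PresentedGroup.of h : TurkishGroup) = 1 ∧
    (PresentedGroup.of t : TurkishGroup) = 1 := by
  have hm : ∀ A B : List TLetter, tWord A * (tWord B)⁻¹ ∈ turkishRels →
      (A.map (PresentedGroup.of (rels := turkishRels))).prod =
        (B.map (PresentedGroup.of (rels := turkishRels))).prod := by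
    intro A B hAB
    have key : ∀ l : List TLetter, PresentedGroup.mk turkishRels (tWord l) =
        (l.map (PresentedGroup.of (rels := turkishRels))).prod := by
      intro l
      rw [tWord, map_list_prod, List.map_map]
      rfl
    have h1 := PresentedGroup.one_of_mem hAB
    rw [map_mul, map_inv, mul_inv_eq_one, key, key] at h1
    exact h1
  have e1 := hm [d,e,r,s,h,a,n,e] [d,e,r,s,a,n,e] (by simp [turkishRels])
  have e2 := hm [a,n,ii,t,t,e,p,e] [a,n,ii,t,e,p,e] (by simp [turkishRels])
  simp only [List.map_cons, List.map_nil, List.prod_cons, List.prod_nil, mul_one,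
    mul_right_inj] at e1 e2
  exact ⟨mul_eq_right.mp e1, mul_eq_right.mp e2⟩
end

section
/- In the Turkish homophonic quotient group G_T, the image of the letter a equals b·e·y⁻¹·e⁻¹·b⁻¹ (where b, e, y denote the images of those letters); in particular the images of a and ı lie in the subgroup of G_T generated by the images of b, e, and y. -/
open TLetter

theorem tr_eq {A B : List TLetter} (h : tWord A * (tWord B)⁻¹ ∈ turkishRels) :
    (A.map (fun x => (PresentedGroup.of x : TurkishGroup))).prod =
      (B.map (fun x => (PresentedGroup.of x : TurkishGroup))).prod := by
  have h1 : PresentedGroup.mk turkishRels (tWord A * (tWord B)⁻¹) = 1 :=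
    PresentedGroup.one_of_mem h
  rw [map_mul, map_inv, mul_inv_eq_one] at h1
  simpa [tWord, map_list_prod, List.map_map, Function.comp_def, PresentedGroup.of] using h1

/-- In the Turkish homophonic quotient group, a = b·e·y⁻¹·e⁻¹·b⁻¹; in particular
the images of a and ı lie in the subgroup generated by the images of b, e, y. -/
theorem turkish_a_in_terms_of_b_e_y :
    (PresentedGroup.of a : TurkishGroup) =
      PresentedGroup.of b * PresentedGroup.of e * (PresentedGroup.of y)⁻¹ *
        (PresentedGroup.of e)⁻¹ * (PresentedGroup.of b)⁻¹ ∧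
    (PresentedGroup.of a : TurkishGroup) ∈
      Subgroup.closure {(PresentedGroup.of b : TurkishGroup),
        PresentedGroup.of e, PresentedGroup.of y} ∧
    (PresentedGroup.of ii : TurkishGroup) ∈
      Subgroup.closure {(PresentedGroup.of b : TurkishGroup),
        PresentedGroup.of e, PresentedGroup.of y} := by
  have h1 := tr_eq (A := [k,a,a,n]) (B := [k,a,gg,a,n]) (by simp [turkishRels])
  have h5 := tr_eq (A := [b,a,k,a,y,ii,m]) (B := [b,a,k,ii,y,ii,m]) (by simp [turkishRels])
  have h6 := tr_eq (A := [i,cc,e,c,e,k]) (B := [i,cc,i,c,e,k]) (by simp [turkishRels])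
  have h7 := tr_eq (A := [a,gg,a,b,e,y]) (B := [a,b,i]) (by simp [turkishRels])
  simp only [List.map_cons, List.map_nil, List.prod_cons, List.prod_nil, mul_one,
    mul_right_inj, mul_left_inj] at h1 h5 h6 h7
  have hg : (PresentedGroup.of gg : TurkishGroup) = 1 := by
    have h : (1 : TurkishGroup) * (PresentedGroup.of a * PresentedGroup.of n) =
      PresentedGroup.of gg * (PresentedGroup.of a * PresentedGroup.of n) := by
      rw [one_mul]; exact h1
    exact (mul_right_cancel h).symm
  rw [hg, one_mul, ← h6, ← mul_assoc, ← mul_assoc] at h7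
  have ha : (PresentedGroup.of a : TurkishGroup) =
      PresentedGroup.of b * PresentedGroup.of e * (PresentedGroup.of y)⁻¹ *
        (PresentedGroup.of e)⁻¹ * (PresentedGroup.of b)⁻¹ := by
    rw [← h7]; group
  have hm : (PresentedGroup.of a : TurkishGroup) ∈
      Subgroup.closure {(PresentedGroup.of b : TurkishGroup),
        PresentedGroup.of e, PresentedGroup.of y} := by
    have hb := Subgroup.subset_closure (k := {(PresentedGroup.of b : TurkishGroup),
        PresentedGroup.of e, PresentedGroup.of y})
    rw [ha]
    refine mul_mem (mul_mem (mul_mem (mul_mem ?_ ?_) (inv_mem ?_)) (inv_mem ?_)) (inv_mem ?_) <;>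
      exact hb (by simp)
  exact ⟨ha, hm, h5 ▸ hm⟩
end

section
/- The Turkish homophonic quotient group G_T is a free group, with the images of the 23 letters b, c, ç, d, e, f, g, j, k, l, m, n, o, ö, p, r, s, ş, u, ü, v, y, z as a free basis: there is a group isomorphism from the free group on 23 generators onto G_T sending the i-th generator to the image of the i-th letter in this list. -/
open TLetter

/-- The 23 letters b, c, ç, d, e, f, g, j, k, l, m, n, o, ö, p, r, s, ş, u, ü, v,
y, z, in order. -/
def turkishBasis : Fin 23 → TLetter :=
  ![b, c, cc, d, e, f, g, j, k, l, m, n, o, oo, p, r, s, ss, u, uu, v, y, z]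

/-- Images of the letters in the free group on 23 generators. -/
def turkishInv : TLetter → FreeGroup (Fin 23)
  | .a => .of 0 * .of 4 * (.of 0 * .of 4 * .of 21)⁻¹
  | .b => .of 0
  | .c => .of 1
  | .cc => .of 2
  | .d => .of 3
  | .e => .of 4
  | .f => .of 5
  | .g => .of 6
  | .gg => 1
  | .h => 1
  | .ii => .of 0 * .of 4 * (.of 0 * .of 4 * .of 21)⁻¹
  | .i => .of 4
  | .j => .of 7
  | .k => .of 8
  | .l => .of 9
  | .m => .of 10
  | .n => .of 11
  | .o => .of 12
  | .oo => .of 13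
  | .p => .of 14
  | .r => .of 15
  | .s => .of 16
  | .ss => .of 17
  | .t => 1
  | .u => .of 18
  | .uu => .of 19
  | .v => .of 20
  | .y => .of 21
  | .z => .of 22

theorem turkishInv_rels : ∀ w ∈ turkishRels, FreeGroup.lift turkishInv w = 1 := by
  intro w hw
  simp only [turkishRels, Set.mem_insert_iff, Set.mem_singleton_iff] at hw
  rcases hw with rfl | rfl | rfl | rfl | rfl | rfl | rfl <;>
    simp [tWord, turkishInv, mul_assoc]

/-- Two words forming a relator have equal products in the quotient. -/
theorem turkish_word_eq (A B : List TLetter)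
    (hAB : tWord A * (tWord B)⁻¹ ∈ turkishRels) :
    (A.map (PresentedGroup.of (rels := turkishRels))).prod
      = (B.map (PresentedGroup.of (rels := turkishRels))).prod := by
  have h1 := PresentedGroup.one_of_mem hAB
  rw [map_mul, map_inv, mul_inv_eq_one] at h1
  simp only [tWord, map_list_prod, List.map_map] at h1
  exact h1

theorem turkish_letters :
    (PresentedGroup.of gg : TurkishGroup) = 1 ∧ (PresentedGroup.of h : TurkishGroup) = 1 ∧
    (PresentedGroup.of t : TurkishGroup) = 1 ∧
    (PresentedGroup.of ii : TurkishGroup) = PresentedGroup.of a ∧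
    (PresentedGroup.of i : TurkishGroup) = PresentedGroup.of e ∧
    (PresentedGroup.of a : TurkishGroup) = PresentedGroup.of b * PresentedGroup.of e *
      (PresentedGroup.of b * PresentedGroup.of e * PresentedGroup.of y)⁻¹ := by
  have h1 := turkish_word_eq [k,a,a,n] [k,a,gg,a,n] (by simp [turkishRels])
  have h2 := turkish_word_eq [d,e,r,s,h,a,n,e] [d,e,r,s,a,n,e] (by simp [turkishRels])
  have h4 := turkish_word_eq [a,n,ii,t,t,e,p,e] [a,n,ii,t,e,p,e] (by simp [turkishRels])
  have h5 := turkish_word_eq [b,a,k,a,y,ii,m] [b,a,k,ii,y,ii,m] (by simp [turkishRels])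
  have h6 := turkish_word_eq [i,cc,e,c,e,k] [i,cc,i,c,e,k] (by simp [turkishRels])
  have h7 := turkish_word_eq [a,gg,a,b,e,y] [a,b,i] (by simp [turkishRels])
  simp only [List.map_cons, List.map_nil, List.prod_cons, List.prod_nil, mul_one,
    mul_right_inj] at h1 h2 h4 h5 h6 h7
  simp only [← mul_assoc, mul_left_inj] at h1 h2 h4 h5 h6
  have g1 : (PresentedGroup.of gg : TurkishGroup) = 1 := by simpa using h1.symm
  have g2 : (PresentedGroup.of h : TurkishGroup) = 1 := by simpa using h2
  have g4 : (PresentedGroup.of t : TurkishGroup) = 1 := by simpa using h4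
  refine ⟨g1, g2, g4, h5.symm, h6.symm, ?_⟩
  rw [g1, one_mul, ← h6] at h7
  rw [eq_mul_inv_iff_mul_eq]
  simpa only [mul_assoc] using h7

/-- The Turkish homophonic quotient group is a free group with the images of the
23 letters b, c, ç, d, e, f, g, j, k, l, m, n, o, ö, p, r, s, ş, u, ü, v, y, z
as a free basis. -/
theorem turkish_group_free_of_rank_23 :
    ∃ f : FreeGroup (Fin 23) ≃* TurkishGroup,
      ∀ i : Fin 23, f (FreeGroup.of i) = PresentedGroup.of (turkishBasis i) := by
  obtain ⟨q1, q2, q3, q4, q5, q6⟩ := turkish_letters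
  let F : FreeGroup (Fin 23) →* TurkishGroup :=
    FreeGroup.lift fun x => PresentedGroup.of (turkishBasis x)
  let I : TurkishGroup →* FreeGroup (Fin 23) := PresentedGroup.toGroup turkishInv_rels
  have hIF : I.comp F = MonoidHom.id _ := by
    ext x
    simp only [MonoidHom.comp_apply, F, I, FreeGroup.lift_apply_of, PresentedGroup.toGroup.of,
      MonoidHom.id_apply]
    fin_cases x <;> rfl
  have hFI : F.comp I = MonoidHom.id _ := by
    ext x
    simp only [MonoidHom.comp_apply, F, I, PresentedGroup.toGroup.of, MonoidHom.id_apply]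
    cases x <;> simp only [turkishInv, map_mul, map_inv, map_one, FreeGroup.lift_apply_of,
      q1, q2, q3, q4, q5] <;> first | rfl | exact q6.symm
  refine ⟨MonoidHom.toMulEquiv F I hIF hFI, fun x => ?_⟩
  change F (FreeGroup.of x) = _
  simp only [F, FreeGroup.lift_apply_of]
end
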